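/- For n ≥ 4, the center of S̃_n is exactly {1, z}; that is, z is the unique non-trivial central element of S̃_n. -/

import Mathlib

open Equiv

/-- Generator `z` as an element of the free group. -/
def zF (n : ℕ) : FreeGroup (Fin (n-1) ⊕ Unit) := FreeGroup.of (Sum.inr ())

/-- Generator `τ̃ᵢ` as an element of the free group. -/
def tF (n : ℕ) (i : Fin (n-1)) : FreeGroup (Fin (n-1) ⊕ Unit) := FreeGroup.of (Sum.inl i)

/-- Relations of the spin extension of the symmetric group. -/
def spinRels (n : ℕ) : Set (FreeGroup (Fin (n-1) ⊕ Unit)) :=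
  {zF n * zF n} ∪
  {w | ∃ i : Fin (n-1), w = zF n * tF n i * (tF n i * zF n)⁻¹} ∪
  {w | ∃ i : Fin (n-1), w = tF n i * tF n i * (zF n)⁻¹} ∪
  {w | ∃ i j : Fin (n-1), 1 < |(i : ℤ) - (j : ℤ)| ∧ w = tF n i * tF n j * (zF n * tF n j * tF n i)⁻¹} ∪
  {w | ∃ i j : Fin (n-1), (j : ℕ) = (i : ℕ) + 1 ∧
        w = tF n i * tF n j * tF n i * (tF n j * tF n i * tF n j)⁻¹}

/-- The spin extension `S̃ₙ` of the symmetric group, as a presented group. -/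
abbrev SpinSym (n : ℕ) := PresentedGroup (spinRels n)

/-- The central element `z` of `S̃ₙ`. -/
def zt (n : ℕ) : SpinSym n := PresentedGroup.of (Sum.inr ())

/-- The generator `τ̃ᵢ` of `S̃ₙ`. -/
def tt (n : ℕ) (i : Fin (n-1)) : SpinSym n := PresentedGroup.of (Sum.inl i)

/-- `i` as an element of `Fin n`. -/
def finL (n : ℕ) (i : Fin (n-1)) : Fin n := ⟨i, by have := i.2; omega⟩

/-- `i+1` as an element of `Fin n`. -/
def finR (n : ℕ) (i : Fin (n-1)) : Fin n := ⟨(i : ℕ) + 1, by have := i.2; omega⟩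

/-- `τ̃ₖ` for a natural number index, `1` out of range. -/
def ttN (n : ℕ) (k : ℕ) : SpinSym n := if h : k < n - 1 then tt n ⟨k, h⟩ else 1

/-- For `i ≤ j`, the word `τ̃ᵢ·τ̃ᵢ₊₁⋯τ̃ⱼ₋₂·τ̃ⱼ₋₁·τ̃ⱼ₋₂⋯τ̃ᵢ₊₁·τ̃ᵢ` (equal to `1` when `i = j`). -/
def ttilCore (n i j : ℕ) : SpinSym n :=
  (((List.range' i (j - i)) ++ (List.range' i (j - 1 - i)).reverse).map (ttN n)).prod

/-- The lifted transpositions `τ̃_{i,j}`, with `τ̃_{j,i} = z·τ̃_{i,j}` for `i < j`,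
and `τ̃_{k,k} = 1`. -/
def ttil (n i j : ℕ) : SpinSym n := if j < i then zt n * ttilCore n j i else ttilCore n i j

section CoxeterWords

variable {G : Type*} [Group G] (s : ℕ → G)

/-- The descending word `s (j + d - 1) * ⋯ * s (j + 1) * s j` with `d` letters. -/
def descWord (j : ℕ) : ℕ → G
  | 0 => 1
  | d + 1 => s (j + d) * descWord j d

/-- The Coxeter relations of type `A` among `s 0, …, s (m - 1)`. -/
structure IsTypeACoxeter (m : ℕ) : Prop where
  mul_self : ∀ i < m, s i * s i = 1
  comm : ∀ i j, i + 1 < j → j < m → s i * s j = s j * s i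
  braid : ∀ i, i + 1 < m → s i * s (i + 1) * s i = s (i + 1) * s i * s (i + 1)

variable {s} {m : ℕ}

theorem descWord_succ_left (j d : ℕ) :
    descWord s j (d + 1) = descWord s (j + 1) d * s j := by
  induction d with
  | zero => simp [descWord]
  | succ d ih =>
    rw [descWord, ih, descWord, mul_assoc, show j + (d + 1) = j + 1 + d by ring]

namespace IsTypeACoxeter

theorem descWord_mul_of_lt (hs : IsTypeACoxeter s m) {i j d : ℕ} (hi : i + 1 < j)
    (hd : j + d ≤ m) : descWord s j d * s i = s i * descWord s j d := by
  induction d with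
  | zero => simp [descWord]
  | succ d ih =>
    rw [descWord, mul_assoc, ih (by omega), ← mul_assoc, ← mul_assoc,
      hs.comm i (j + d) (by omega) (by omega)]

theorem descWord_mul_of_gt (hs : IsTypeACoxeter s m) {i j d : ℕ} (hi : j + d < i)
    (him : i < m) : descWord s j d * s i = s i * descWord s j d := by
  induction d with
  | zero => simp [descWord]
  | succ d ih =>
    rw [descWord, mul_assoc, ih (by omega), ← mul_assoc, ← mul_assoc,
      hs.comm (j + d) i (by omega) him]

theorem descWord_mul_succ (hs : IsTypeACoxeter s m) {i j d : ℕ} (hj : j ≤ i)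
    (hi : i + 1 < j + d) (hd : j + d ≤ m) :
    descWord s j d * s (i + 1) = s i * descWord s j d := by
  induction d with
  | zero => omega
  | succ d ih =>
    rcases Nat.lt_or_ge (i + 1) (j + d) with h | h
    · rw [descWord, mul_assoc, ih h (by omega), ← mul_assoc, ← mul_assoc,
        hs.comm i (j + d) h (by omega)]
    · obtain ⟨e, rfl⟩ : ∃ e, d = e + 1 := ⟨d - 1, by omega⟩
      obtain rfl : i = j + e := by omega
      have hc := hs.descWord_mul_of_gt (i := j + e + 1) (j := j) (d := e) (by omega) (by omega)
      have hb := hs.braid (j + e) (by omega)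
      rw [descWord, descWord, mul_assoc, mul_assoc, ← add_assoc, hc]
      simp only [← mul_assoc]
      rw [hb]

/-- Every element of the subgroup generated by `s 0, …, s k` is the product of an element of the
subgroup generated by `s 0, …, s (k - 1)` and a descending word starting with `s k`. -/
theorem exists_eq_mul_descWord (hs : IsTypeACoxeter s m) {k : ℕ} (hk : k < m) {g : G}
    (hg : g ∈ Subgroup.closure (s '' Set.Iio (k + 1))) :
    ∃ h ∈ Subgroup.closure (s '' Set.Iio k), ∃ j d, j + d = k + 1 ∧ g = h * descWord s j d := by
  have mem {i : ℕ} (hi : i < k) : s i ∈ Subgroup.closure (s '' Set.Iio k) :=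
    Subgroup.subset_closure ⟨i, hi, rfl⟩
  have step {h : G} (hh : h ∈ Subgroup.closure (s '' Set.Iio k)) {j d i : ℕ}
      (hjd : j + d = k + 1) (hi : i < k + 1) :
      ∃ h' ∈ Subgroup.closure (s '' Set.Iio k), ∃ j' d', j' + d' = k + 1 ∧
        h * descWord s j d * s i = h' * descWord s j' d' := by
    rcases lt_trichotomy i j with hij | rfl | hij
    · rcases Nat.lt_or_ge (i + 1) j with hij' | hij'
      · exact ⟨h * s i, mul_mem hh (mem (by omega)), j, d, hjd, by
          rw [mul_assoc, hs.descWord_mul_of_lt hij' (by omega), mul_assoc]⟩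
      · obtain rfl : j = i + 1 := by omega
        exact ⟨h, hh, i, d + 1, by omega, by rw [mul_assoc, descWord_succ_left]⟩
    · obtain ⟨e, rfl⟩ : ∃ e, d = e + 1 := ⟨d - 1, by omega⟩
      exact ⟨h, hh, i + 1, e, by omega, by
        rw [descWord_succ_left, mul_assoc, mul_assoc, hs.mul_self i (by omega), mul_one]⟩
    · obtain ⟨i, rfl⟩ : ∃ e, i = e + 1 := ⟨i - 1, by omega⟩
      exact ⟨h * s i, mul_mem hh (mem (by omega)), j, d, hjd, by
        rw [mul_assoc, hs.descWord_mul_succ (by omega) (by omega) (by omega), mul_assoc]⟩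
  induction hg using Subgroup.closure_induction_right with
  | one => exact ⟨1, one_mem _, k + 1, 0, rfl, by simp [descWord]⟩
  | mul_right x hx y hy ih =>
    obtain ⟨h, hh, j, d, hjd, rfl⟩ := ih
    obtain ⟨i, hi, rfl⟩ := hy
    exact step hh hjd hi
  | mul_inv_cancel x hx y hy ih =>
    obtain ⟨h, hh, j, d, hjd, rfl⟩ := ih
    obtain ⟨i, hi, rfl⟩ := hy
    rw [inv_eq_of_mul_eq_one_left (hs.mul_self i (lt_of_lt_of_le hi hk))]
    exact step hh hjd hi

variable {f : G →* Perm ℕ}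

theorem map_descWord_apply (hf : ∀ i < m, f (s i) = swap i (i + 1)) {j d : ℕ}
    (hd : j + d ≤ m) : f (descWord s j d) j = j + d := by
  induction d with
  | zero => simp [descWord]
  | succ d ih =>
    rw [descWord, map_mul, Perm.mul_apply, ih (by omega), hf _ (by omega), swap_apply_left,
      add_assoc]

theorem map_apply_of_lt (hf : ∀ i < m, f (s i) = swap i (i + 1)) {k l : ℕ} (hk : k ≤ m)
    (hl : k < l) {g : G} (hg : g ∈ Subgroup.closure (s '' Set.Iio k)) : f g l = l := by
  have hle : Subgroup.closure (s '' Set.Iio k) ≤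
      (MulAction.stabilizer (Perm ℕ) l).comap f := by
    rw [Subgroup.closure_le]
    rintro _ ⟨i, hi, rfl⟩
    have hi' : i < k := hi
    simp only [SetLike.mem_coe, Subgroup.mem_comap, MulAction.mem_stabilizer_iff,
      Perm.smul_def, hf i (by omega)]
    exact swap_apply_of_ne_of_ne (by omega) (by omega)
  exact hle hg

/-- A homomorphism sending Coxeter generators of type `A` to adjacent transpositions is injective
on the subgroup they generate. -/
theorem eq_one_of_map_eq_one (hs : IsTypeACoxeter s m) (hf : ∀ i < m, f (s i) = swap i (i + 1))
    {k : ℕ} (hk : k ≤ m) {g : G} (hg : g ∈ Subgroup.closure (s '' Set.Iio k)) (h1 : f g = 1) :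
    g = 1 := by
  induction k generalizing g with
  | zero => simpa using hg
  | succ k ih =>
    obtain ⟨h, hh, j, d, hjd, rfl⟩ := hs.exists_eq_mul_descWord hk hg
    have hj : f (h * descWord s j d) j = j := by rw [h1, Perm.one_apply]
    rw [map_mul, Perm.mul_apply, map_descWord_apply hf (by omega),
      map_apply_of_lt hf (k := k) (by omega) (by omega) hh] at hj
    obtain rfl : d = 0 := by omega
    rw [descWord, mul_one] at h1 ⊢
    exact ih (by omega) hh h1

end IsTypeACoxeter

end CoxeterWords

section Permutations

theorem swap_mul_swap_comm_of_lt {i j : ℕ} (h : i + 1 < j) :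
    swap i (i + 1) * swap j (j + 1) = swap j (j + 1) * swap i (i + 1) := by
  ext x
  simp only [Perm.mul_apply, swap_apply_def]
  grind

theorem swap_braid (i : ℕ) :
    swap i (i + 1) * swap (i + 1) (i + 2) * swap i (i + 1) =
      swap (i + 1) (i + 2) * swap i (i + 1) * swap (i + 1) (i + 2) := by
  ext x
  simp only [Perm.mul_apply, swap_apply_def]
  grind

/-- A permutation supported on `{0, …, m}` and commuting with all adjacent transpositions of this
set is trivial if `2 ≤ m`. -/
theorem eq_one_of_commute_swap {m : ℕ} (hm : 2 ≤ m) {σ : Perm ℕ}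
    (hσ : ∀ l, m < l → σ l = l)
    (hc : ∀ i < m, σ * swap i (i + 1) = swap i (i + 1) * σ) : σ = 1 := by
  have hmem (i : ℕ) (hi : i < m) :
      (σ i = i ∨ σ i = i + 1) ∧ (σ (i + 1) = i ∨ σ (i + 1) = i + 1) := by
    have h1 := congrArg (fun p : Perm ℕ => p i) (hc i hi)
    have h2 := congrArg (fun p : Perm ℕ => p (i + 1)) (hc i hi)
    have h3 : σ i ≠ σ (i + 1) := fun h => absurd (σ.injective h) (by omega)
    simp only [Perm.mul_apply, swap_apply_def] at h1 h2
    grind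
  have hmid (i : ℕ) (h0 : 0 < i) (hi : i < m) : σ i = i := by
    have h1 := (hmem i hi).1
    have h2 := (hmem (i - 1) (by omega)).2
    rw [Nat.sub_add_cancel h0] at h2
    omega
  ext l
  rw [Perm.one_apply]
  rcases Nat.lt_or_ge m l with hl | hl
  · exact hσ l hl
  rcases Nat.eq_zero_or_pos l with rfl | h0
  · have h1 := (hmem 0 (by omega)).1
    have h2 := hmid 1 (by omega) (by omega)
    have h3 : σ 0 ≠ σ 1 := fun h => absurd (σ.injective h) (by omega)
    omega
  rcases hl.lt_or_eq with hl | rfl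
  · exact hmid l h0 hl
  · have h1 := (hmem (l - 1) (by omega)).2
    have h2 := hmid (l - 1) (by omega) (by omega)
    have h3 : σ (l - 1) ≠ σ l := fun h => absurd (σ.injective h) (by omega)
    rw [Nat.sub_add_cancel h0] at h1
    omega

end Permutations

section SpinRelations

variable {n : ℕ}

/-- The universal property of the spin extension. -/
theorem exists_spinSym_hom {H : Type*} [Group H] (z : H) (t : Fin (n - 1) → H)
    (hz : z * z = 1) (hzt : ∀ i, z * t i = t i * z) (htt : ∀ i, t i * t i = z)
    (hfar : ∀ i j : Fin (n - 1), 1 < |(i : ℤ) - (j : ℤ)| → t i * t j = z * t j * t i)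
    (hbraid : ∀ i j : Fin (n - 1), (j : ℕ) = (i : ℕ) + 1 →
      t i * t j * t i = t j * t i * t j) :
    ∃ f : SpinSym n →* H, f (zt n) = z ∧ ∀ i, f (tt n i) = t i := by
  have key : ∀ r ∈ spinRels n, FreeGroup.lift (Sum.elim t fun _ => z) r = 1 := by
    rintro r ((((h | ⟨i, rfl⟩) | ⟨i, rfl⟩) | ⟨i, j, hij, rfl⟩) | ⟨i, j, hij, rfl⟩)
    · rw [Set.mem_singleton_iff] at h
      simp [h, zF, hz]
    · simp [zF, tF, hzt]
    · simp [zF, tF, htt]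
    · simp only [zF, tF, map_mul, map_inv, FreeGroup.lift_apply_of, Sum.elim_inl, Sum.elim_inr]
      rw [hfar i j hij, mul_inv_cancel]
    · simp only [tF, map_mul, map_inv, FreeGroup.lift_apply_of, Sum.elim_inl]
      rw [hbraid i j hij, mul_inv_cancel]
  exact ⟨PresentedGroup.toGroup key, PresentedGroup.toGroup.of key,
    fun i => PresentedGroup.toGroup.of key⟩

theorem mk_eq_mk_of_mul_inv_mem_spinRels {x y : FreeGroup (Fin (n - 1) ⊕ Unit)}
    (h : x * y⁻¹ ∈ spinRels n) :
    PresentedGroup.mk (spinRels n) x = PresentedGroup.mk (spinRels n) y := by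
  rw [← mul_inv_eq_one, ← map_inv, ← map_mul]
  exact (QuotientGroup.eq_one_iff _).2 (Subgroup.subset_normalClosure h)

theorem zt_mul_zt : zt n * zt n = 1 :=
  mk_eq_mk_of_mul_inv_mem_spinRels (x := zF n * zF n) (y := 1) (by simp [spinRels])

theorem zt_mul_tt (i : Fin (n - 1)) : zt n * tt n i = tt n i * zt n :=
  mk_eq_mk_of_mul_inv_mem_spinRels (x := zF n * tF n i)
    (y := tF n i * zF n) (Or.inl <| Or.inl <| Or.inl <| Or.inr ⟨i, rfl⟩)

theorem tt_mul_tt (i : Fin (n - 1)) : tt n i * tt n i = zt n :=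
  mk_eq_mk_of_mul_inv_mem_spinRels (x := tF n i * tF n i)
    (y := zF n) (Or.inl <| Or.inl <| Or.inr ⟨i, rfl⟩)

theorem tt_mul_tt_of_far {i j : Fin (n - 1)} (hij : 1 < |(i : ℤ) - (j : ℤ)|) :
    tt n i * tt n j = zt n * tt n j * tt n i :=
  mk_eq_mk_of_mul_inv_mem_spinRels (x := tF n i * tF n j)
    (y := zF n * tF n j * tF n i) (Or.inl <| Or.inr ⟨i, j, hij, rfl⟩)

theorem tt_braid {i j : Fin (n - 1)} (hij : (j : ℕ) = (i : ℕ) + 1) :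
    tt n i * tt n j * tt n i = tt n j * tt n i * tt n j :=
  mk_eq_mk_of_mul_inv_mem_spinRels (x := tF n i * tF n j * tF n i)
    (y := tF n j * tF n i * tF n j) (Or.inr ⟨i, j, hij, rfl⟩)

theorem closure_zt_tt : Subgroup.closure (insert (zt n) (Set.range (tt n))) = ⊤ := by
  rw [eq_top_iff, ← PresentedGroup.closure_range_of (spinRels n)]
  apply Subgroup.closure_mono
  rintro _ ⟨i | _, rfl⟩
  · exact Or.inr ⟨i, rfl⟩
  · exact Or.inl rfl

theorem zt_mem_center : zt n ∈ Subgroup.center (SpinSym n) := by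
  rw [Subgroup.mem_center_iff]
  intro g
  have hle : Subgroup.closure (insert (zt n) (Set.range (tt n))) ≤
      Subgroup.centralizer {zt n} := by
    rw [Subgroup.closure_le]
    rintro _ (rfl | ⟨i, rfl⟩)
    · simp [Subgroup.mem_centralizer_singleton_iff]
    · simp [Subgroup.mem_centralizer_singleton_iff, zt_mul_tt]
  have hg := hle (closure_zt_tt ▸ Subgroup.mem_top g)
  rw [Subgroup.mem_centralizer_singleton_iff] at hg
  exact hg

theorem ttN_of_lt {i : ℕ} (hi : i < n - 1) : ttN n i = tt n ⟨i, hi⟩ := dif_pos hi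

end SpinRelations

section Clifford

/-- The form `-(1/2) ∑ xᵢ²`, for which the vectors `eᵢ - eᵢ₊₁` take the value `-1`. -/
noncomputable def spinForm (n : ℕ) : QuadraticForm ℝ (Fin n → ℝ) :=
  QuadraticMap.weightedSumSquares ℝ fun _ => (-(1 / 2) : ℝ)

/-- The simple root `eᵢ - eᵢ₊₁`. -/
noncomputable def simpleRoot (n : ℕ) (i : Fin (n - 1)) : Fin n → ℝ :=
  Pi.single (finL n i) 1 - Pi.single (finR n i) 1

variable {n : ℕ}

theorem spinForm_apply (x : Fin n → ℝ) : spinForm n x = -(1 / 2) * x ⬝ᵥ x := by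
  simp [spinForm, QuadraticMap.weightedSumSquares_apply, dotProduct, Finset.mul_sum]

theorem polar_spinForm (x y : Fin n → ℝ) :
    QuadraticMap.polar (spinForm n) x y = -(x ⬝ᵥ y) := by
  simp only [QuadraticMap.polar, spinForm_apply, add_dotProduct, dotProduct_add,
    dotProduct_comm y x]
  ring

theorem spinForm_simpleRoot (i : Fin (n - 1)) : spinForm n (simpleRoot n i) = -1 := by
  simp [spinForm_apply, simpleRoot, finL, finR]
  norm_num

theorem polar_simpleRoot_of_far {i j : Fin (n - 1)} (hij : 1 < |(i : ℤ) - (j : ℤ)|) :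
    QuadraticMap.polar (spinForm n) (simpleRoot n i) (simpleRoot n j) = 0 := by
  have h1 : (i : ℕ) ≠ j := by rintro h; simp [h] at hij
  have h2 : (i : ℕ) ≠ j + 1 := by rintro h; simp [h] at hij
  have h3 : (i : ℕ) + 1 ≠ j := by rintro h; simp [← h] at hij
  simp [polar_spinForm, simpleRoot, finL, finR, h1, h2, h3, Fin.ext_iff]

theorem polar_simpleRoot_succ {i j : Fin (n - 1)} (hij : (j : ℕ) = (i : ℕ) + 1) :
    QuadraticMap.polar (spinForm n) (simpleRoot n i) (simpleRoot n j) = 1 := by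
  simp only [polar_spinForm, simpleRoot, finL, finR, hij]
  simp [Pi.single_apply]
  omega

theorem ι_simpleRoot_mul_self (i : Fin (n - 1)) :
    CliffordAlgebra.ι (spinForm n) (simpleRoot n i) *
      CliffordAlgebra.ι (spinForm n) (simpleRoot n i) = -1 := by
  rw [CliffordAlgebra.ι_sq_scalar, spinForm_simpleRoot, map_neg, map_one]

theorem zt_ne_one : zt n ≠ 1 := by
  let t (i : Fin (n - 1)) : (CliffordAlgebra (spinForm n))ˣ :=
    ⟨CliffordAlgebra.ι _ (simpleRoot n i), -CliffordAlgebra.ι _ (simpleRoot n i),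
      by rw [mul_neg, ι_simpleRoot_mul_self, neg_neg],
      by rw [neg_mul, ι_simpleRoot_mul_self, neg_neg]⟩
  obtain ⟨f, hz, -⟩ := exists_spinSym_hom (-1) t (by simp) (by simp)
    (fun i => Units.ext (ι_simpleRoot_mul_self i))
    (fun i j hij => Units.ext (by
      simp [t, CliffordAlgebra.ι_mul_ι_comm (simpleRoot n i), polar_simpleRoot_of_far hij]))
    (fun i j hij => Units.ext (by
      simp only [t, Units.val_mul, CliffordAlgebra.ι_mul_ι_mul_ι, spinForm_simpleRoot,
        QuadraticMap.polar_comm _ (simpleRoot n j), polar_simpleRoot_succ hij]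
      congr 1
      module))
  intro h
  rw [h, map_one] at hz
  have : Invertible (2 : ℝ) := invertibleOfNonzero two_ne_zero
  have h1 : algebraMap ℝ (CliffordAlgebra (spinForm n)) 1 = algebraMap ℝ _ (-1) := by
    simpa using congrArg Units.val hz
  have h2 := (algebraMap ℝ (CliffordAlgebra (spinForm n))).injective h1
  norm_num at h2

end Clifford

section Kernel

variable {n : ℕ}

/-- The projection of the spin extension to permutations. -/
theorem exists_spinSym_hom_perm (n : ℕ) :
    ∃ f : SpinSym n →* Perm ℕ, f (zt n) = 1 ∧
      ∀ i : Fin (n - 1), f (tt n i) = swap (i : ℕ) (i + 1) := by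
  refine exists_spinSym_hom 1 (fun i => swap (i : ℕ) (i + 1)) (by simp) (by simp) (by simp)
    (fun i j hij => ?_) (fun i j hij => ?_)
  · rw [one_mul]
    rcases lt_abs.1 hij with h | h
    · exact (swap_mul_swap_comm_of_lt (by omega)).symm
    · exact swap_mul_swap_comm_of_lt (by omega)
  · simp only [hij]
    exact swap_braid i

instance : (Subgroup.zpowers (zt n)).Normal where
  conj_mem x hx g := by
    have hc := Subgroup.mem_center_iff.1 (Subgroup.zpowers_le.2 zt_mem_center hx) g
    rwa [hc, mul_inv_cancel_right]

theorem isTypeACoxeter_mk_ttN :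
    IsTypeACoxeter (fun i => (ttN n i : SpinSym n ⧸ Subgroup.zpowers (zt n))) (n - 1) := by
  have hz : ((zt n : SpinSym n) : SpinSym n ⧸ Subgroup.zpowers (zt n)) = 1 :=
    (QuotientGroup.eq_one_iff _).2 (Subgroup.mem_zpowers _)
  refine ⟨fun i hi => ?_, fun i j hij hj => ?_, fun i hi => ?_⟩
  · rw [ttN_of_lt hi, ← QuotientGroup.mk_mul, tt_mul_tt, hz]
  · rw [ttN_of_lt hj, ttN_of_lt (by omega), ← QuotientGroup.mk_mul,
      tt_mul_tt_of_far (lt_abs.2 (Or.inr (by simp; omega))), QuotientGroup.mk_mul,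
      QuotientGroup.mk_mul, hz, one_mul]
  · rw [ttN_of_lt hi, ttN_of_lt (by omega)]
    simp only [← QuotientGroup.mk_mul]
    rw [tt_braid rfl]

theorem mk_mem_closure_ttN (g : SpinSym n) :
    (g : SpinSym n ⧸ Subgroup.zpowers (zt n)) ∈
      Subgroup.closure ((fun i => (ttN n i : SpinSym n ⧸ Subgroup.zpowers (zt n))) ''
        Set.Iio (n - 1)) := by
  have hle : Subgroup.closure (insert (zt n) (Set.range (tt n))) ≤
      (Subgroup.closure ((fun i => (ttN n i : SpinSym n ⧸ Subgroup.zpowers (zt n))) ''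
        Set.Iio (n - 1))).comap (QuotientGroup.mk' _) := by
    rw [Subgroup.closure_le]
    rintro _ (rfl | ⟨i, rfl⟩)
    · have hz : QuotientGroup.mk' (Subgroup.zpowers (zt n)) (zt n) = 1 :=
        (QuotientGroup.eq_one_iff _).2 (Subgroup.mem_zpowers _)
      rw [SetLike.mem_coe, Subgroup.mem_comap, hz]
      exact one_mem _
    · exact Subgroup.subset_closure ⟨i, i.2, by simp [ttN_of_lt i.2]⟩
  exact hle (closure_zt_tt ▸ Subgroup.mem_top g)

theorem eq_one_or_eq_zt_of_mem_zpowers {g : SpinSym n} (hg : g ∈ Subgroup.zpowers (zt n)) :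
    g = 1 ∨ g = zt n := by
  obtain ⟨k, rfl⟩ := Subgroup.mem_zpowers_iff.1 hg
  have h2 : zt n ^ (2 : ℤ) = 1 := by rw [zpow_two, zt_mul_zt]
  rcases Int.even_or_odd' k with ⟨l, rfl | rfl⟩
  · left; rw [zpow_mul, h2, one_zpow]
  · right; rw [zpow_add, zpow_mul, h2, one_zpow, one_mul, zpow_one]

end Kernel

theorem center_eq (n : ℕ) (hn : 4 ≤ n) :
    zt n ≠ 1 ∧ ∀ g : SpinSym n, g ∈ Subgroup.center (SpinSym n) ↔ g = 1 ∨ g = zt n := by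
  refine ⟨zt_ne_one, fun g => ⟨fun hg => ?_, ?_⟩⟩
  · obtain ⟨f, hfz, hft⟩ := exists_spinSym_hom_perm n
    let F : SpinSym n ⧸ Subgroup.zpowers (zt n) →* Perm ℕ :=
      QuotientGroup.lift _ f ((Subgroup.zpowers_le (H := f.ker)).2 hfz)
    have hF : ∀ i < n - 1, F (ttN n i : SpinSym n ⧸ Subgroup.zpowers (zt n)) =
        swap i (i + 1) := fun i hi => by
      rw [ttN_of_lt hi]
      exact hft ⟨i, hi⟩
    have hfg : f g = 1 := by
      refine eq_one_of_commute_swap (m := n - 1) (by omega) (fun l hl => ?_) (fun i hi => ?_)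
      · exact IsTypeACoxeter.map_apply_of_lt hF le_rfl hl (mk_mem_closure_ttN g)
      · rw [← hft ⟨i, hi⟩, ← map_mul, ← map_mul, Subgroup.mem_center_iff.1 hg]
    exact eq_one_or_eq_zt_of_mem_zpowers ((QuotientGroup.eq_one_iff g).1
      (isTypeACoxeter_mk_ttN.eq_one_of_map_eq_one hF le_rfl (mk_mem_closure_ttN g) hfg))
  · rintro (rfl | rfl)
    · exact one_mem _
    · exact zt_mem_center
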